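/- For all real numbers q ≥ 1, m ≥ 1, 0 < ρ < 1, every x ∈ ℝ², and every multi-index α = (α₁,α₂) ∈ ℕ², the brick function u_{q,m,ρ}(x) := ρ²/(ρ² + (x₁ − ρq)² + (m x₂)²) satisfies |∂^α u_{q,m,ρ}(x)|/α! ≤ ρ²·m^{α₂}·8^{|α|+1}·(u_{q,m,ρ}(x)/ρ²)^{1+|α|/2}. -/

import Mathlib

/-!
Taylor coefficients `c_α(f) = ∂^α f(x) / α!` turn products of functions into Cauchy products. With
`D = ρ² + (x₁ - ρq)² + (m x₂)²` the brick function is `u = ρ² / D`, so `D u = ρ²` is constant and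
`D(x) c_α(u) = -∑_{0 ≠ β ≤ α} c_β(D) c_{α-β}(u)` for `α ≠ 0`. Only the four coefficients of `D` with
`β ∈ {(1,0), (2,0), (0,1), (0,2)}` enter. If each satisfies `|c_β(D)| ≤ D(x)/4 · P^β₁ Q^β₂`, then
induction on `α` gives `|c_α(u)| ≤ u(x) P^α₁ Q^α₂`. Since `|x₁ - ρq|` and `|m x₂|` are at most
`√D(x)`, the choice `P = 8/√D(x)`, `Q = 8|m|/√D(x)` works, with equality `2√D = D/4 · 8/√D` in the
extreme first-order case; this is where the constant `8` comes from.
-/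

open Real Filter Topology
open scoped Classical
noncomputable section
def pd1 (f : ℝ × ℝ → ℝ) : ℝ × ℝ → ℝ := fun x => fderiv ℝ f x (1, 0)
def pd2 (f : ℝ × ℝ → ℝ) : ℝ × ℝ → ℝ := fun x => fderiv ℝ f x (0, 1)
def pd (α : ℕ × ℕ) (f : ℝ × ℝ → ℝ) : ℝ × ℝ → ℝ := pd1^[α.1] (pd2^[α.2] f)
def LogConvexSeq (M : ℕ → ℝ) : Prop := Monotone (fun k => M (k + 1) / M k)
def MemDC (M : ℕ → ℝ) (f : ℝ × ℝ → ℝ) : Prop :=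
  ContDiff ℝ (⊤ : ℕ∞) f ∧
  ∀ K : Set (ℝ × ℝ), IsCompact K →
    ∃ A > (0:ℝ), ∃ B > (0:ℝ), ∀ x ∈ K, ∀ α : ℕ × ℕ,
      |pd α f x| ≤ A * B ^ (α.1 + α.2) * (Nat.factorial α.1 * Nat.factorial α.2) * M (α.1 + α.2)
def blowup : ℝ × ℝ → ℝ × ℝ := fun p => (p.1 * Real.cos p.2, p.1 * Real.sin p.2)
def ostrowski (M : ℕ → ℝ) (r : ℝ) : ℝ := ⨆ n : ℕ, r ^ (n + 2) / M n
def baseH (M : ℕ → ℝ) (x : ℝ × ℝ) : ℝ :=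
  ∑' k : ℕ,
    (M (k + 2) / M (k + 1)) ^ 2 / (2 ^ (k + 1) * ostrowski M (M (k + 2) / M (k + 1))) *
      (1 / (x.1 ^ 2 + (M (k + 2) / M (k + 1) * x.2) ^ 2 + 1))
def blockF (M : ℕ → ℝ) (q ρ : ℝ) (x : ℝ × ℝ) : ℝ := baseH M (x.1 / ρ - q, x.2 / ρ)
def rhoSeq (M : ℕ → ℝ) (n : ℕ) : ℝ := M n / M (n + 1)
def FGamma (M : ℕ → ℝ) (E : ℝ → ℝ) (Λ : Set ℕ) (x : ℝ × ℝ) : ℝ :=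
  ∑' l : ℕ, Set.indicator Λ
    (fun l => blockF M (E (rhoSeq M l) / rhoSeq M l) (rhoSeq M l) x /
      (ostrowski M (rhoSeq M l)⁻¹ * 2 ^ l)) l

open scoped ContDiff Nat
open Finset

section Leibniz

variable {R A : Type*} [CommSemiring R] [CommSemiring A] [Algebra R A]

lemma iterate_derivation_mul (d : Derivation R A A) (n : ℕ) (a b : A) :
    d^[n] (a * b) = ∑ k ∈ Iic n, n.choose k • (d^[k] a * d^[n - k] b) := by
  rw [← Nat.range_succ_eq_Iic,
    ← Nat.sum_antidiagonal_eq_sum_range_succ fun k l ↦ n.choose k • (d^[k] a * d^[l] b)]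
  induction n with
  | zero => simp
  | succ n ih =>
    rw [sum_antidiagonal_choose_succ_nsmul fun k l ↦ d^[k] a * d^[l] b,
      Function.iterate_succ_apply', ih, map_sum, ← sum_add_distrib]
    refine sum_congr rfl fun p hp ↦ ?_
    rw [map_nsmul, d.leibniz, nsmul_add, smul_eq_mul, smul_eq_mul, mul_comm (d^[p.2] b),
      Nat.choose_symm_of_eq_add (mem_antidiagonal.1 hp).symm]
    simp only [Function.iterate_succ_apply']

lemma iterate_derivation_iterate_derivation_mul (d₁ d₂ : Derivation R A A) (α : ℕ × ℕ) (a b : A) :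
    d₁^[α.1] (d₂^[α.2] (a * b)) = ∑ β ∈ Iic α, (α.1.choose β.1 * α.2.choose β.2) •
      (d₁^[β.1] (d₂^[β.2] a) * d₁^[(α - β).1] (d₂^[(α - β).2] b)) := by
  have iterate_sum (f : ℕ → A) :
      d₁^[α.1] (∑ l ∈ Iic α.2, α.2.choose l • f l) =
        ∑ l ∈ Iic α.2, α.2.choose l • d₁^[α.1] (f l) := by
    have h := map_sum (d₁.toLinearMap ^ α.1) (fun l ↦ α.2.choose l • f l) (Iic α.2)
    simp only [map_nsmul, Module.End.coe_pow] at h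
    exact h
  simp only [iterate_derivation_mul d₂, iterate_sum, iterate_derivation_mul d₁, smul_sum, smul_smul]
  rw [sum_comm, ← sum_product', Iic_product_Iic]
  exact sum_congr rfl fun β _ ↦ by rw [mul_comm]; rfl

end Leibniz

section SmoothFunctions

variable (𝕜 E : Type*) [NontriviallyNormedField 𝕜] [NormedAddCommGroup E] [NormedSpace 𝕜 E]

/-- The algebra of smooth `𝕜`-valued functions on `E`. Bundling smoothness makes directional
derivatives derivations, so that the Leibniz rule holds without side conditions. -/
def smoothFunctions : Subalgebra 𝕜 (E → 𝕜) where
  carrier := {f | ContDiff 𝕜 ∞ f}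
  mul_mem' hf hg := Set.mem_ofPred.2 ((Set.mem_ofPred.1 hf).mul (Set.mem_ofPred.1 hg))
  add_mem' hf hg := Set.mem_ofPred.2 ((Set.mem_ofPred.1 hf).add (Set.mem_ofPred.1 hg))
  algebraMap_mem' _ := Set.mem_ofPred.2 contDiff_const

variable {𝕜 E}

lemma mem_smoothFunctions {f : E → 𝕜} : f ∈ smoothFunctions 𝕜 E ↔ ContDiff 𝕜 ∞ f := Iff.rfl

lemma differentiableAt_smoothFunctions (f : smoothFunctions 𝕜 E) (x : E) :
    DifferentiableAt 𝕜 (f : E → 𝕜) x :=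
  (mem_smoothFunctions.1 f.2).differentiable (by simp) x

variable (𝕜) in
/-- The directional derivative `f ↦ ∂f/∂v` as a derivation of the algebra of smooth functions. -/
def dirDeriv (v : E) : Derivation 𝕜 (smoothFunctions 𝕜 E) (smoothFunctions 𝕜 E) :=
  Derivation.mk'
    { toFun f := ⟨fun x ↦ fderiv 𝕜 f x v, mem_smoothFunctions.2 <|
        ((mem_smoothFunctions.1 f.2).fderiv_right (m := ∞) (by simp)).clm_apply contDiff_const⟩
      map_add' f g := by
        ext x
        simp [fderiv_add (differentiableAt_smoothFunctions f x)
          (differentiableAt_smoothFunctions g x)]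
      map_smul' c f := by
        ext x
        simp [fderiv_const_smul (differentiableAt_smoothFunctions f x)] }
    fun f g ↦ by
      ext x
      simp [fderiv_mul (differentiableAt_smoothFunctions f x)
        (differentiableAt_smoothFunctions g x)]

end SmoothFunctions

section TaylorCoefficients

local notation "∂₁" => dirDeriv ℝ ((1, 0) : ℝ × ℝ)
local notation "∂₂" => dirDeriv ℝ ((0, 1) : ℝ × ℝ)

lemma pd_coe (α : ℕ × ℕ) (f : smoothFunctions ℝ (ℝ × ℝ)) :
    pd α f = (∂₁^[α.1] (∂₂^[α.2] f) : smoothFunctions ℝ (ℝ × ℝ)) := by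
  have h₁ : Function.Semiconj (↑) ∂₁ pd1 := fun _ ↦ rfl
  have h₂ : Function.Semiconj (↑) ∂₂ pd2 := fun _ ↦ rfl
  rw [pd, ← h₂.iterate_right, ← h₁.iterate_right]

/-- The Taylor coefficient `∂^α f(x) / α!`. -/
def taylorCoeff (f : ℝ × ℝ → ℝ) (x : ℝ × ℝ) (α : ℕ × ℕ) : ℝ :=
  pd α f x / (α.1 ! * α.2 !)

lemma taylorCoeff_zero (f : ℝ × ℝ → ℝ) (x : ℝ × ℝ) : taylorCoeff f x 0 = f x := by
  simp [taylorCoeff, pd]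

lemma taylorCoeff_const (c : ℝ) (x : ℝ × ℝ) {α : ℕ × ℕ} (hα : α ≠ 0) :
    taylorCoeff (fun _ ↦ c) x α = 0 := by
  have h := pd_coe α (algebraMap ℝ (smoothFunctions ℝ (ℝ × ℝ)) c)
  have : pd α (fun _ ↦ c) = 0 := by
    refine h.trans ?_
    rcases α with ⟨_ | i, _ | j⟩
    · exact absurd rfl hα
    all_goals simp [Function.iterate_succ_apply]
  simp [taylorCoeff, this]

lemma taylorCoeff_mul {f g : ℝ × ℝ → ℝ} (hf : ContDiff ℝ ∞ f) (hg : ContDiff ℝ ∞ g)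
    (x : ℝ × ℝ) (α : ℕ × ℕ) :
    taylorCoeff (f * g) x α = ∑ β ∈ Iic α, taylorCoeff f x β * taylorCoeff g x (α - β) := by
  lift f to smoothFunctions ℝ (ℝ × ℝ) using mem_smoothFunctions.2 hf
  lift g to smoothFunctions ℝ (ℝ × ℝ) using mem_smoothFunctions.2 hg
  have h := congrFun (pd_coe α (f * g)) x
  rw [iterate_derivation_iterate_derivation_mul] at h
  simp only [taylorCoeff, pd_coe]
  rw [← Subalgebra.coe_mul, h, AddSubmonoidClass.coe_finsetSum, Finset.sum_apply, sum_div]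
  refine sum_congr rfl fun β hβ ↦ ?_
  have hβα := mem_Iic.1 hβ
  simp only [nsmul_eq_mul, Nat.cast_mul, MulMemClass.coe_mul, SubringClass.coe_natCast,
    Pi.mul_apply, Pi.natCast_apply, Prod.fst_sub, Prod.snd_sub, Nat.cast_choose ℝ hβα.1,
    Nat.cast_choose ℝ hβα.2]
  field_simp

end TaylorCoefficients

section CauchyProduct

lemma norm_le_of_cauchyProduct_eq_zero {𝕜 : Type*} [NormedField 𝕜] {a c : ℕ × ℕ → 𝕜}
    {S : Finset (ℕ × ℕ)} {P Q : ℝ} (hP : 0 ≤ P) (hQ : 0 ≤ Q) (ha₀ : a 0 ≠ 0)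
    (hac : ∀ α ≠ 0, ∑ β ∈ Iic α, a β * c (α - β) = 0)
    (haS : ∀ β ≠ 0, β ∉ S → a β = 0)
    (ha : ∀ β ∈ S, ‖a β‖ ≤ ‖a 0‖ / #S * (P ^ β.1 * Q ^ β.2)) (α : ℕ × ℕ) :
    ‖c α‖ ≤ ‖c 0‖ * (P ^ α.1 * Q ^ α.2) := by
  induction α using WellFoundedLT.induction with
  | ind α ih =>
  rcases eq_or_ne α 0 with rfl | hα
  · simp
  set C := ‖c 0‖ * (P ^ α.1 * Q ^ α.2) with hC
  set F := {β ∈ (Iic α).erase 0 | β ∈ S} with hF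
  have term_le (β : ℕ × ℕ) (hβ : β ∈ F) : ‖a β * c (α - β)‖ ≤ ‖a 0‖ / #S * C := by
    simp only [hF, mem_filter, mem_erase, mem_Iic] at hβ
    obtain ⟨⟨hβ₀, hβα⟩, hβS⟩ := hβ
    obtain ⟨γ, rfl⟩ := exists_add_of_le hβα
    rw [add_tsub_cancel_left, norm_mul]
    refine (mul_le_mul (ha β hβS) (ih γ (lt_add_of_pos_left γ (pos_iff_ne_zero.2 hβ₀)))
      (norm_nonneg _) (by positivity)).trans_eq ?_
    simp only [hC, Prod.fst_add, Prod.snd_add]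
    ring
  have head_eq : a 0 * c α = -∑ β ∈ F, a β * c (α - β) := by
    rw [sum_filter_of_ne, eq_neg_iff_add_eq_zero, ← hac α hα,
      ← add_sum_erase _ _ (mem_Iic.2 zero_le), tsub_zero]
    intro β hβ h
    contrapose! h
    rw [haS β (mem_erase.1 hβ).1 h, zero_mul]
  have card_le : (#F : ℝ) ≤ #S := mod_cast card_le_card fun β hβ ↦ (mem_filter.1 hβ).2
  refine le_of_mul_le_mul_left ?_ (norm_pos_iff.2 ha₀)
  calc ‖a 0‖ * ‖c α‖ = ‖∑ β ∈ F, a β * c (α - β)‖ := by rw [← norm_mul, head_eq, norm_neg]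
    _ ≤ #F * (‖a 0‖ / #S * C) := by
      simpa only [sum_const, nsmul_eq_mul] using norm_sum_le_of_le F term_le
    _ = #F / #S * (‖a 0‖ * C) := by ring
    _ ≤ ‖a 0‖ * C :=
      mul_le_of_le_one_left (by positivity) (div_le_one_of_le₀ card_le (by positivity))

end CauchyProduct

section Brick

/-- The denominator `D` of the brick function `u = ρ² / D`. -/
def brickDen (q m ρ : ℝ) (y : ℝ × ℝ) : ℝ :=
  ρ ^ 2 + (y.1 - ρ * q) ^ 2 + (m * y.2) ^ 2

lemma contDiff_brickDen (q m ρ : ℝ) : ContDiff ℝ ∞ (brickDen q m ρ) := by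
  unfold brickDen
  fun_prop

lemma brickDen_pos (q m : ℝ) {ρ : ℝ} (hρ : ρ ≠ 0) (y : ℝ × ℝ) : 0 < brickDen q m ρ y := by
  unfold brickDen
  positivity

lemma pd1_affine (a b c : ℝ) : pd1 (fun y ↦ a * y.1 + b * y.2 + c) = fun _ ↦ a := by
  ext x
  simp (disch := fun_prop) [pd1, fderiv_fun_add, fderiv_const_mul, fderiv_fst, fderiv_snd]

lemma pd2_affine (a b c : ℝ) : pd2 (fun y ↦ a * y.1 + b * y.2 + c) = fun _ ↦ b := by
  ext x
  simp (disch := fun_prop) [pd2, fderiv_fun_add, fderiv_const_mul, fderiv_fst, fderiv_snd]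

lemma fderiv_brickDen (q m ρ : ℝ) (x v : ℝ × ℝ) :
    fderiv ℝ (brickDen q m ρ) x v = 2 * (x.1 - ρ * q) * v.1 + 2 * (m * x.2) * (m * v.2) := by
  have h₁ : HasFDerivAt (𝕜 := ℝ) (fun y : ℝ × ℝ ↦ y.1 - ρ * q) _ x :=
    hasFDerivAt_fst.sub_const (ρ * q)
  have h₂ : HasFDerivAt (𝕜 := ℝ) (fun y : ℝ × ℝ ↦ m * y.2) _ x := hasFDerivAt_snd.const_mul m
  have h : HasFDerivAt (brickDen q m ρ) _ x := ((h₁.pow 2).const_add (ρ ^ 2)).add (h₂.pow 2)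
  simp [h.fderiv]

lemma taylorCoeff_brickDen (q m ρ : ℝ) (x : ℝ × ℝ) {β : ℕ × ℕ} (hβ : β ≠ 0) :
    taylorCoeff (brickDen q m ρ) x β =
      if β = (1, 0) then 2 * (x.1 - ρ * q) else if β = (2, 0) then 1
      else if β = (0, 1) then 2 * m ^ 2 * x.2 else if β = (0, 2) then m ^ 2 else 0 := by
  have pd1_const (c : ℝ) : pd1 (fun _ ↦ c) = fun _ ↦ 0 := by simpa using pd1_affine 0 0 c
  have pd2_const (c : ℝ) : pd2 (fun _ ↦ c) = fun _ ↦ 0 := by simpa using pd2_affine 0 0 c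
  have iterate_pd1_zero (n : ℕ) : pd1^[n] (fun _ ↦ 0) = fun _ ↦ 0 :=
    Function.iterate_fixed (pd1_const 0) n
  have iterate_pd2_zero (n : ℕ) : pd2^[n] (fun _ ↦ 0) = fun _ ↦ 0 :=
    Function.iterate_fixed (pd2_const 0) n
  have pd1_brickDen : pd1 (brickDen q m ρ) = fun y ↦ 2 * (y.1 - ρ * q) := by
    ext y
    simp [pd1, fderiv_brickDen]
  have pd2_brickDen : pd2 (brickDen q m ρ) = fun y ↦ 2 * m ^ 2 * y.2 := by
    ext y
    simp only [pd2, fderiv_brickDen]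
    ring
  have pd1_pd1 : pd1 (fun y ↦ 2 * (y.1 - ρ * q)) = fun _ ↦ 2 := by
    simpa [← sub_eq_add_neg, ← mul_sub] using pd1_affine 2 0 (-(2 * (ρ * q)))
  have pd1_pd2 : pd1 (fun y ↦ 2 * m ^ 2 * y.2) = fun _ ↦ 0 := by
    simpa using pd1_affine 0 (2 * m ^ 2) 0
  have pd2_pd2 : pd2 (fun y ↦ 2 * m ^ 2 * y.2) = fun _ ↦ 2 * m ^ 2 := by
    simpa using pd2_affine 0 (2 * m ^ 2) 0
  rcases β with ⟨_ | _ | _ | i, _ | _ | _ | j⟩ <;>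
    simp_all [taylorCoeff, pd, Function.iterate_succ_apply]

lemma abs_fst_sub_le_sqrt_brickDen (q m ρ : ℝ) (x : ℝ × ℝ) :
    |x.1 - ρ * q| ≤ √(brickDen q m ρ x) :=
  abs_le_sqrt (by unfold brickDen; linarith [sq_nonneg ρ, sq_nonneg (m * x.2)])

lemma abs_mul_snd_le_sqrt_brickDen (q m ρ : ℝ) (x : ℝ × ℝ) :
    |m * x.2| ≤ √(brickDen q m ρ x) :=
  abs_le_sqrt (by unfold brickDen; linarith [sq_nonneg ρ, sq_nonneg (x.1 - ρ * q)])

lemma abs_taylorCoeff_brickDen_le (q m : ℝ) {ρ : ℝ} (hρ : ρ ≠ 0) (x : ℝ × ℝ) {β : ℕ × ℕ}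
    (hβ : β ≠ 0) :
    |taylorCoeff (brickDen q m ρ) x β| ≤ brickDen q m ρ x / 4 *
      ((8 / √(brickDen q m ρ x)) ^ β.1 * (8 * |m| / √(brickDen q m ρ x)) ^ β.2) := by
  have h₁ := abs_fst_sub_le_sqrt_brickDen q m ρ x
  have h₂ := abs_mul_snd_le_sqrt_brickDen q m ρ x
  have hD := brickDen_pos q m hρ x
  have hs := sqrt_pos.2 hD
  rw [taylorCoeff_brickDen q m ρ x hβ, ← sq_sqrt hD.le, sqrt_sq hs.le]
  generalize √(brickDen q m ρ x) = s at *
  split_ifs with h h h h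
  · calc |2 * (x.1 - ρ * q)| = 2 * |x.1 - ρ * q| := by rw [abs_mul, abs_two]
      _ ≤ 2 * s := by gcongr
      _ = _ := by subst h; dsimp only; field_simp [sq_abs]; ring
  · calc |(1 : ℝ)| ≤ 16 := by norm_num
      _ = _ := by subst h; dsimp only; field_simp [sq_abs]; ring
  · calc |2 * m ^ 2 * x.2| = 2 * |m| * |m * x.2| := by simp only [abs_mul, abs_two, abs_pow]; ring
      _ ≤ 2 * |m| * s := by gcongr
      _ = _ := by subst h; dsimp only; field_simp [sq_abs]; ring
  · calc |m ^ 2| ≤ 16 * |m| ^ 2 := by rw [abs_pow]; linarith [sq_nonneg |m|]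
      _ = _ := by subst h; dsimp only; field_simp [sq_abs]; ring
  · rw [abs_zero]
    positivity

/-- The brick function `u_{q,m,ρ}`. -/
def brick (q m ρ : ℝ) (y : ℝ × ℝ) : ℝ :=
  ρ ^ 2 / brickDen q m ρ y

lemma contDiff_brick (q m : ℝ) {ρ : ℝ} (hρ : ρ ≠ 0) : ContDiff ℝ ∞ (brick q m ρ) :=
  contDiff_const.div (contDiff_brickDen q m ρ) fun y ↦ (brickDen_pos q m hρ y).ne'

lemma brickDen_mul_brick (q m : ℝ) {ρ : ℝ} (hρ : ρ ≠ 0) :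
    brickDen q m ρ * brick q m ρ = fun _ ↦ ρ ^ 2 :=
  funext fun y ↦ mul_div_cancel₀ _ (brickDen_pos q m hρ y).ne'

lemma abs_taylorCoeff_brick_le (q m : ℝ) {ρ : ℝ} (hρ : ρ ≠ 0) (x : ℝ × ℝ) (α : ℕ × ℕ) :
    |taylorCoeff (brick q m ρ) x α| ≤ brick q m ρ x *
      ((8 / √(brickDen q m ρ x)) ^ α.1 * (8 * |m| / √(brickDen q m ρ x)) ^ α.2) := by
  have hD := brickDen_pos q m hρ x
  have h := norm_le_of_cauchyProduct_eq_zero (a := taylorCoeff (brickDen q m ρ) x)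
    (c := taylorCoeff (brick q m ρ) x) (S := {(1, 0), (2, 0), (0, 1), (0, 2)})
    (P := 8 / √(brickDen q m ρ x)) (Q := 8 * |m| / √(brickDen q m ρ x))
    (by positivity) (by positivity) ?_ ?_ ?_ ?_ α
  · have hu : 0 ≤ brick q m ρ x := div_nonneg (sq_nonneg ρ) hD.le
    rwa [taylorCoeff_zero, norm_of_nonneg hu] at h
  · rw [taylorCoeff_zero]
    exact hD.ne'
  · intro α hα
    rw [← taylorCoeff_mul (contDiff_brickDen q m ρ) (contDiff_brick q m hρ),
      brickDen_mul_brick q m hρ, taylorCoeff_const _ _ hα]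
  · intro β hβ hβS
    simp_all [taylorCoeff_brickDen]
  · intro β hβ
    have hβ₀ : β ≠ 0 := by rintro rfl; revert hβ; decide
    simpa [taylorCoeff_zero, abs_of_pos hD] using abs_taylorCoeff_brickDen_le q m hρ x hβ₀

theorem brick_estimate_general (q m : ℝ) {ρ : ℝ} (hρ : ρ ≠ 0) (x : ℝ × ℝ) (α : ℕ × ℕ) :
    |pd α (fun y : ℝ × ℝ => ρ ^ 2 / (ρ ^ 2 + (y.1 - ρ * q) ^ 2 + (m * y.2) ^ 2)) x| /
      (Nat.factorial α.1 * Nat.factorial α.2) ≤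
    ρ ^ 2 * |m| ^ α.2 * 8 ^ (α.1 + α.2) *
      (ρ ^ 2 / (ρ ^ 2 + (x.1 - ρ * q) ^ 2 + (m * x.2) ^ 2) / ρ ^ 2) ^
        (1 + ((α.1 + α.2 : ℕ) : ℝ) / 2) := by
  have hD := brickDen_pos q m hρ x
  calc _ = |taylorCoeff (brick q m ρ) x α| := by
        rw [taylorCoeff, abs_div, abs_of_pos (by positivity : (0 : ℝ) < α.1 ! * α.2 !)]
        rfl
    _ ≤ _ := abs_taylorCoeff_brick_le q m hρ x α
    _ = ρ ^ 2 * |m| ^ α.2 * 8 ^ (α.1 + α.2) *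
        (brick q m ρ x / ρ ^ 2) ^ (1 + ((α.1 + α.2 : ℕ) : ℝ) / 2) := by
      have hinv : brick q m ρ x / ρ ^ 2 = (brickDen q m ρ x)⁻¹ := by
        unfold brick
        field_simp
      rw [hinv, rpow_add (by positivity), rpow_one, rpow_div_two_eq_sqrt _ (by positivity),
        rpow_natCast, sqrt_inv, brick]
      ring

end Brick

/-- Remark 3.4 (a priori estimate on the brick function): for
`u_{q,m,ρ}(x) = ρ²/(ρ² + (x₁ - ρq)² + (m x₂)²)`,
`|∂^α u(x)|/α! ≤ ρ² m^{α₂} 8^{|α|+1} (u(x)/ρ²)^{1+|α|/2}`. -/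
theorem brick_estimate (q m ρ : ℝ) (hq : 1 ≤ q) (hm : 1 ≤ m) (hρ0 : 0 < ρ) (hρ1 : ρ < 1)
    (x : ℝ × ℝ) (α : ℕ × ℕ) :
    |pd α (fun y : ℝ × ℝ => ρ ^ 2 / (ρ ^ 2 + (y.1 - ρ * q) ^ 2 + (m * y.2) ^ 2)) x| /
      (Nat.factorial α.1 * Nat.factorial α.2) ≤
    ρ ^ 2 * m ^ α.2 * 8 ^ (α.1 + α.2 + 1) *
      (ρ ^ 2 / (ρ ^ 2 + (x.1 - ρ * q) ^ 2 + (m * x.2) ^ 2) / ρ ^ 2) ^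
        (1 + ((α.1 + α.2 : ℕ) : ℝ) / 2) := by
  grw [brick_estimate_general q m hρ0.ne' x α, abs_of_pos (one_pos.trans_le hm)]
  gcongr _ * 8 ^ ?_ * _ <;> norm_num
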